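/- Let F be a field with char F ∉ {2, 3} and let H be the Highwater algebra over F. For every integer j ≥ 1: (i) a_j − a_{−j} is an eigenvector of left multiplication by a_0 with eigenvalue 1/2; (ii) a_j + a_{−j} − 2a_0 + 4s_j is an eigenvector of left multiplication by a_0 with eigenvalue 2; (iii) a_j + a_{−j} − 2a_0 − (4/3)s_j is an eigenvector of left multiplication by a_0 with eigenvalue 0; and (iv) a_0 is idempotent, so a_0 is an eigenvector with eigenvalue 1. -/

import Mathlib

/- STATEMENT 17: explicit eigenvectors of ad(a_0) in the Highwater algebra for the\neigenvalues 1/2, 2, 0 and 1. -/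

/-- The underlying vector space of the Highwater algebra: formal `F`-linear combinations
of basis elements `a_i` (`i : ℤ`, encoded `Sum.inl i`) and `s_j` (`j ≥ 1`, encoded
`Sum.inr (j - 1)`). -/
abbrev HW (F : Type*) [Field F] := (ℤ ⊕ ℕ) →₀ F

variable (F : Type*) [Field F]

/-- The axis `a_i` of the Highwater algebra. -/
noncomputable def hwa (i : ℤ) : HW F := Finsupp.single (Sum.inl i) 1

/-- The element `s_j` of the Highwater algebra (`s_0 = 0`). -/
noncomputable def hws : ℕ → HW F
  | 0 => 0
  | j + 1 => Finsupp.single (Sum.inr j) 1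

/-- Product of two basis elements of the Highwater algebra:
`a_i · a_k = (1/2)(a_i + a_k) + s_{|i-k|}`,
`a_i · s_j = -(3/4) a_i + (3/8)(a_{i-j} + a_{i+j}) + (3/2) s_j`,
`s_j · s_k = (3/4)(s_j + s_k) - (3/8)(s_{|j-k|} + s_{j+k})`. -/
noncomputable def hwBM : ℤ ⊕ ℕ → ℤ ⊕ ℕ → HW F
  | Sum.inl i, Sum.inl k => ((1 : F) / 2) • (hwa F i + hwa F k) + hws F (i - k).natAbs
  | Sum.inl i, Sum.inr j =>
      (-(3 : F) / 4) • hwa F i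
        + ((3 : F) / 8) • (hwa F (i - ((j : ℤ) + 1)) + hwa F (i + ((j : ℤ) + 1)))
        + ((3 : F) / 2) • hws F (j + 1)
  | Sum.inr j, Sum.inl i =>
      (-(3 : F) / 4) • hwa F i
        + ((3 : F) / 8) • (hwa F (i - ((j : ℤ) + 1)) + hwa F (i + ((j : ℤ) + 1)))
        + ((3 : F) / 2) • hws F (j + 1)
  | Sum.inr j, Sum.inr k =>
      ((3 : F) / 4) • (hws F (j + 1) + hws F (k + 1))
        - ((3 : F) / 8) • (hws F ((j : ℤ) - (k : ℤ)).natAbs + hws F (j + k + 2))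

/-- The multiplication of the Highwater algebra: the bilinear extension of `hwBM`. -/
noncomputable def hwMul (x y : HW F) : HW F :=
  x.sum fun i ci => y.sum fun j cj => (ci * cj) • hwBM F i j

/-- Left multiplication by the axis `a_i`, as a linear map. -/
noncomputable def hwAd (i : ℤ) : HW F →ₗ[F] HW F :=
  Finsupp.linearCombination F (hwBM F (Sum.inl i))

theorem hwMul_hwa (i : ℤ) (y : HW F) : hwMul F (hwa F i) y = hwAd F i y := by
  simp [hwMul, hwa, hwAd, Finsupp.linearCombination_apply]

theorem hwAd_hwa (i k : ℤ) :
    hwAd F i (hwa F k) = ((1 : F) / 2) • (hwa F i + hwa F k) + hws F (i - k).natAbs := by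
  simp [hwAd, hwa, hwBM]

theorem hwAd_hws_succ (i : ℤ) (j : ℕ) :
    hwAd F i (hws F (j + 1)) =
      (-(3 : F) / 4) • hwa F i
        + ((3 : F) / 8) • (hwa F (i - ((j : ℤ) + 1)) + hwa F (i + ((j : ℤ) + 1)))
        + ((3 : F) / 2) • hws F (j + 1) := by
  simp [hwAd, hws, hwBM]

theorem hwa_apply_inl (i k : ℤ) : hwa F i (Sum.inl k) = if i = k then 1 else 0 := by
  simp [hwa, Finsupp.single_apply]

theorem hws_apply_inl (j : ℕ) (k : ℤ) : hws F j (Sum.inl k) = 0 := by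
  cases j <;> simp [hws]

theorem highwater_eigenvectors (h2 : ringChar F ≠ 2) (h3 : ringChar F ≠ 3)
    (j : ℕ) (hj : 1 ≤ j) :
    (hwa F (j : ℤ) - hwa F (-(j : ℤ)) ≠ 0 ∧
      hwMul F (hwa F 0) (hwa F (j : ℤ) - hwa F (-(j : ℤ))) =
        ((1 : F) / 2) • (hwa F (j : ℤ) - hwa F (-(j : ℤ)))) ∧
    (hwa F (j : ℤ) + hwa F (-(j : ℤ)) - (2 : F) • hwa F 0 + (4 : F) • hws F j ≠ 0 ∧
      hwMul F (hwa F 0) (hwa F (j : ℤ) + hwa F (-(j : ℤ)) - (2 : F) • hwa F 0 + (4 : F) • hws F j) =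
        (2 : F) • (hwa F (j : ℤ) + hwa F (-(j : ℤ)) - (2 : F) • hwa F 0 + (4 : F) • hws F j)) ∧
    (hwa F (j : ℤ) + hwa F (-(j : ℤ)) - (2 : F) • hwa F 0 - ((4 : F) / 3) • hws F j ≠ 0 ∧
      hwMul F (hwa F 0)
          (hwa F (j : ℤ) + hwa F (-(j : ℤ)) - (2 : F) • hwa F 0 - ((4 : F) / 3) • hws F j) = 0) ∧
    hwMul F (hwa F 0) (hwa F 0) = hwa F 0 := by
  have two_ne : (2 : F) ≠ 0 := Ring.two_ne_zero h2
  have three_ne : (3 : F) ≠ 0 := by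
    intro h
    have hdvd : ringChar F ∣ 3 := (ringChar.spec F 3).1 (by exact_mod_cast h)
    rcases (Nat.dvd_prime Nat.prime_three).1 hdvd with h1 | h1
    · exact CharP.ringChar_ne_one h1
    · exact h3 h1
  have four_ne : (4 : F) ≠ 0 := by
    rw [show (4 : F) = 2 * 2 by norm_num]
    exact mul_ne_zero two_ne two_ne
  have eight_ne : (8 : F) ≠ 0 := by
    rw [show (8 : F) = 2 * 4 by norm_num]
    exact mul_ne_zero two_ne four_ne
  obtain ⟨n, rfl⟩ : ∃ n, j = n + 1 := ⟨j - 1, by omega⟩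
  have neg_ne : -((n + 1 : ℕ) : ℤ) ≠ ((n + 1 : ℕ) : ℤ) := by omega
  have zero_ne : (0 : ℤ) ≠ ((n + 1 : ℕ) : ℤ) := by omega
  have mul_zero_axis : hwAd F 0 (hwa F 0) = hwa F 0 := by
    rw [hwAd_hwa, ← two_smul F (hwa F 0), smul_smul]
    simp [hws, two_ne]
  have mul_pos := hwAd_hwa F 0 ((n + 1 : ℕ) : ℤ)
  have mul_neg := hwAd_hwa F 0 (-((n + 1 : ℕ) : ℤ))
  have mul_s := hwAd_hws_succ F 0 n
  rw [show (0 - ((n + 1 : ℕ) : ℤ)).natAbs = n + 1 by omega] at mul_pos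
  rw [show (0 - -((n + 1 : ℕ) : ℤ)).natAbs = n + 1 by omega] at mul_neg
  rw [show (0 : ℤ) - ((n : ℤ) + 1) = -((n + 1 : ℕ) : ℤ) by push_cast; ring,
    show (0 : ℤ) + ((n : ℤ) + 1) = ((n + 1 : ℕ) : ℤ) by push_cast; ring] at mul_s
  have ne_zero_of_coeff : ∀ x : HW F, x (Sum.inl ((n + 1 : ℕ) : ℤ)) = 1 → x ≠ 0 := by
    rintro x hx rfl
    exact zero_ne_one hx
  simp only [hwMul_hwa, map_add, map_sub, map_smul, mul_zero_axis, mul_pos, mul_neg, mul_s]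
  refine ⟨⟨ne_zero_of_coeff _ ?_, by module⟩, ⟨ne_zero_of_coeff _ ?_, ?_⟩,
    ⟨ne_zero_of_coeff _ ?_, ?_⟩, trivial⟩
  iterate 2
    simp only [Finsupp.add_apply, Finsupp.sub_apply, Finsupp.smul_apply, hwa_apply_inl,
      hws_apply_inl, if_neg neg_ne, if_neg zero_ne, if_true]
    simp
  · match_scalars <;> field_simp <;> ring
  · simp only [Finsupp.add_apply, Finsupp.sub_apply, Finsupp.smul_apply, hwa_apply_inl,
      hws_apply_inl, if_neg neg_ne, if_neg zero_ne, if_true]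
    simp
  · match_scalars <;> field_simp <;> ring
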